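/- arXiv:1511.05770 — 3 statements merged into one kernel-verified Lean document; each statement's English description precedes it below -/
import Mathlib

section
/- Let k ≥ 0 be an integer and G = (V,Σ,P,S) a reduced context-free grammar that is not LR(k). Then there exist rightmost derivations (1) S ⇒*_rm αAw ⇒_rm αβw and (2) S ⇒*_rm γBx ⇒_rm γδx = αβy such that FIRST_k(w) = FIRST_k(y), |γδ| ≥ |αβ|, and αAy ≠ γBx. -/
/-!
Formalization framework for context-free grammars with distinguished
terminal type `T` and nonterminal type `N`.

* `CFG T N` : a context-free grammar `G = (V, Σ, P, S)` where
  `V = Symbol T N`, `Σ = T`, `N` the nonterminals, `P = G.rules`, `S = G.start`.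
* `CFG.Derives` : the (unrestricted) derivation relation `⇒*`.
* `CFG.RmDerives` : the rightmost derivation relation `⇒*_rm`.
* `CFG.LmStep` : one leftmost derivation step.
* `CFG.FirstK G k α` : the set `FIRST_k(α)`.
* `CFG.Reduced` : `G` is reduced.
* `CFG.IsLR G k` : `G` is an `LR(k)`-grammar.
* `CFG.ValidItem G k A β₁ β₂ u γ` : the `LR(k)`-item `[A → β₁·β₂, u]`
  is valid for the string `γ` (so that `γ = α ++ β₁` for some `α`).
-/

/-- A context-free grammar with terminals `T`, nonterminals `N`,
a set of productions and a start symbol. -/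
structure CFG (T N : Type) where
  /-- the set `P` of productions `A → α` -/
  rules : Set (N × List (Symbol T N))
  /-- the start symbol `S` -/
  start : N

namespace CFG

variable {T N : Type}

/-- One (unrestricted) derivation step `α ⇒ β`. -/
def Step (G : CFG T N) (α β : List (Symbol T N)) : Prop :=
  ∃ (A : N) (δ φ ψ : List (Symbol T N)),
    (A, δ) ∈ G.rules ∧ α = φ ++ [Symbol.nonterminal A] ++ ψ ∧ β = φ ++ δ ++ ψ

/-- The derivation relation `α ⇒* β`. -/
def Derives (G : CFG T N) : List (Symbol T N) → List (Symbol T N) → Prop :=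
  Relation.ReflTransGen G.Step

/-- One rightmost derivation step `α ⇒_rm β`:
the rewritten nonterminal is followed only by terminals. -/
def RmStep (G : CFG T N) (α β : List (Symbol T N)) : Prop :=
  ∃ (A : N) (δ φ : List (Symbol T N)) (w : List T),
    (A, δ) ∈ G.rules ∧ α = φ ++ [Symbol.nonterminal A] ++ w.map Symbol.terminal ∧
      β = φ ++ δ ++ w.map Symbol.terminal

/-- The rightmost derivation relation `α ⇒*_rm β`. -/
def RmDerives (G : CFG T N) : List (Symbol T N) → List (Symbol T N) → Prop :=
  Relation.ReflTransGen G.RmStep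

/-- One leftmost derivation step `α ⇒_lm β`:
the rewritten nonterminal is preceded only by terminals. -/
def LmStep (G : CFG T N) (α β : List (Symbol T N)) : Prop :=
  ∃ (A : N) (δ ψ : List (Symbol T N)) (w : List T),
    (A, δ) ∈ G.rules ∧ α = w.map Symbol.terminal ++ [Symbol.nonterminal A] ++ ψ ∧
      β = w.map Symbol.terminal ++ δ ++ ψ

/-- `FIRST_k(α) = {x ∈ Σ* ∣ α ⇒* xy, (y ∈ Σ⁺ ∧ |x| = k) ∨ (y = ε ∧ |x| ≤ k)}`. -/
def FirstK (G : CFG T N) (k : ℕ) (α : List (Symbol T N)) : Set (List T) :=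
  { x | ∃ y : List T,
      G.Derives α ((x ++ y).map Symbol.terminal) ∧
      ((y ≠ [] ∧ x.length = k) ∨ (y = [] ∧ x.length ≤ k)) }

/-- `G` is reduced: `P = ∅` or every symbol `X ∈ V` occurs in a derivation
`S ⇒* αXβ ⇒* w` of a terminal word. -/
def Reduced (G : CFG T N) : Prop :=
  G.rules = ∅ ∨ ∀ X : Symbol T N, ∃ (α β : List (Symbol T N)) (w : List T),
    G.Derives [Symbol.nonterminal G.start] (α ++ [X] ++ β) ∧
    G.Derives (α ++ [X] ++ β) (w.map Symbol.terminal)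

/-- `G` is `LR(k)`: whenever `S ⇒*_rm αAw ⇒_rm αβw` and
`S ⇒*_rm γBx ⇒_rm γδx = αβy` with `FIRST_k(w) = FIRST_k(y)`,
then `α = γ`, `A = B` and `x = y`. -/
def IsLR (G : CFG T N) (k : ℕ) : Prop :=
  ∀ (α β γ δ : List (Symbol T N)) (A B : N) (w x y : List T),
    G.RmDerives [Symbol.nonterminal G.start]
      (α ++ [Symbol.nonterminal A] ++ w.map Symbol.terminal) →
    (A, β) ∈ G.rules →
    G.RmDerives [Symbol.nonterminal G.start]
      (γ ++ [Symbol.nonterminal B] ++ x.map Symbol.terminal) →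
    (B, δ) ∈ G.rules →
    γ ++ δ ++ x.map Symbol.terminal = α ++ β ++ y.map Symbol.terminal →
    G.FirstK k (w.map Symbol.terminal) = G.FirstK k (y.map Symbol.terminal) →
    α = γ ∧ A = B ∧ x = y

/-- The `LR(k)`-item `[A → β₁·β₂, u]` is valid for `γ = α ++ β₁` if there is a
rightmost derivation `S ⇒*_rm αAw ⇒_rm αβ₁β₂w` with `u ∈ FIRST_k(β₂w)`,
where `u ∈ Σ^{≤k}`. -/
def ValidItem (G : CFG T N) (k : ℕ) (A : N) (β₁ β₂ : List (Symbol T N)) (u : List T)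
    (γ : List (Symbol T N)) : Prop :=
  u.length ≤ k ∧ (A, β₁ ++ β₂) ∈ G.rules ∧
  ∃ (α : List (Symbol T N)) (w : List T),
    γ = α ++ β₁ ∧
    G.RmDerives [Symbol.nonterminal G.start]
      (α ++ [Symbol.nonterminal A] ++ w.map Symbol.terminal) ∧
    u ∈ G.FirstK k (β₂ ++ w.map Symbol.terminal)

end CFG

namespace CFG

variable {T N : Type}

theorem map_terminal_injective :
    Function.Injective (List.map (Symbol.terminal : T → Symbol T N)) :=
  List.map_injective_iff.2 fun _ _ h => Symbol.terminal.inj h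

theorem nonterminal_notMem_map_terminal (A : N) (w : List T) :
    Symbol.nonterminal A ∉ w.map (Symbol.terminal : T → Symbol T N) := by
  simp

/-- A terminal word derives only itself. -/
theorem derives_map_terminal_iff (G : CFG T N) (w : List T) (β : List (Symbol T N)) :
    G.Derives (w.map Symbol.terminal) β ↔ β = w.map Symbol.terminal := by
  refine ⟨fun h => ?_, fun h => h ▸ Relation.ReflTransGen.refl⟩
  obtain h | ⟨_, ⟨A, δ, φ, ψ, -, hw, -⟩, -⟩ := Relation.ReflTransGen.cases_head h
  · exact h.symm
  · exact absurd (hw ▸ by simp) (nonterminal_notMem_map_terminal A w)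

theorem firstK_map_terminal (G : CFG T N) (k : ℕ) (w : List T) :
    G.FirstK k (w.map Symbol.terminal) = {w.take k} := by
  ext x
  simp only [FirstK, derives_map_terminal_iff, map_terminal_injective.eq_iff,
    Set.mem_ofPred_eq, Set.mem_singleton_iff]
  constructor
  · rintro ⟨y, rfl, ⟨-, rfl⟩ | ⟨rfl, hx⟩⟩
    · simp
    · simp [List.take_of_length_le hx]
  · rintro rfl
    refine ⟨w.drop k, List.take_append_drop k w, ?_⟩
    by_cases h : w.length ≤ k
    · exact Or.inr ⟨List.drop_eq_nil_of_le h, by simp⟩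
    · exact Or.inl ⟨by simpa using h, by simp; omega⟩

/-- Prepending a common terminal prefix preserves equality of `FIRST_k` on terminal words. -/
theorem firstK_append_congr (G : CFG T N) {k : ℕ} {w y : List T}
    (h : G.FirstK k (w.map Symbol.terminal) = G.FirstK k (y.map Symbol.terminal))
    (z : List T) :
    G.FirstK k ((z ++ w).map Symbol.terminal) = G.FirstK k ((z ++ y).map Symbol.terminal) := by
  simp only [firstK_map_terminal, Set.singleton_eq_singleton_iff, List.take_append] at h ⊢
  have h' := congrArg (List.take (k - z.length)) h
  rw [List.take_take, List.take_take, min_eq_left (Nat.sub_le _ _)] at h'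
  rw [h']

/-- The rightmost nonterminal of a string determines the decomposition around it. -/
theorem eq_of_append_nonterminal_append_map_terminal_eq :
    ∀ {α γ : List (Symbol T N)} {A B : N} {y x : List T},
      α ++ [Symbol.nonterminal A] ++ y.map Symbol.terminal =
        γ ++ [Symbol.nonterminal B] ++ x.map Symbol.terminal →
      α = γ ∧ A = B ∧ y = x
  | [], [], A, B, y, x, h => by
    have h' : A = B ∧ y.map (Symbol.terminal : T → Symbol T N) = x.map Symbol.terminal := by
      simpa only [List.nil_append, List.singleton_append, List.cons.injEq,
        Symbol.nonterminal.injEq] using h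
    exact ⟨rfl, h'.1, map_terminal_injective h'.2⟩
  | [], c :: γ, A, B, y, x, h => by
    have h' : y.map Symbol.terminal =
        γ ++ [Symbol.nonterminal B] ++ x.map Symbol.terminal := (List.cons.inj h).2
    exact absurd (h' ▸ by simp) (nonterminal_notMem_map_terminal B y)
  | c :: α, [], A, B, y, x, h => by
    have h' : α ++ [Symbol.nonterminal A] ++ y.map Symbol.terminal =
        x.map Symbol.terminal := (List.cons.inj h).2
    exact absurd (h' ▸ by simp) (nonterminal_notMem_map_terminal A x)
  | c :: α, d :: γ, A, B, y, x, h => by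
    obtain ⟨hc, h'⟩ := List.cons.inj h
    obtain ⟨hα, hA, hy⟩ := eq_of_append_nonterminal_append_map_terminal_eq h'
    exact ⟨by rw [hc, hα], hA, hy⟩

end CFG

/-- **Lemma 1.** If the reduced cfg `G` is not `LR(k)`, then there exist
rightmost derivations `S ⇒*_rm αAw ⇒_rm αβw` and `S ⇒*_rm γBx ⇒_rm γδx = αβy`
with `FIRST_k(w) = FIRST_k(y)`, `|γδ| ≥ |αβ|` and `αAy ≠ γBx`. -/
theorem statement_0 {T N : Type} (G : CFG T N) (k : ℕ)
    (hred : G.Reduced) (hnlr : ¬ G.IsLR k) :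
    ∃ (α β γ δ : List (Symbol T N)) (A B : N) (w x y : List T),
      G.RmDerives [Symbol.nonterminal G.start]
        (α ++ [Symbol.nonterminal A] ++ w.map Symbol.terminal) ∧
      (A, β) ∈ G.rules ∧
      G.RmDerives [Symbol.nonterminal G.start]
        (γ ++ [Symbol.nonterminal B] ++ x.map Symbol.terminal) ∧
      (B, δ) ∈ G.rules ∧
      γ ++ δ ++ x.map Symbol.terminal = α ++ β ++ y.map Symbol.terminal ∧
      G.FirstK k (w.map Symbol.terminal) = G.FirstK k (y.map Symbol.terminal) ∧
      (α ++ β).length ≤ (γ ++ δ).length ∧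
      α ++ [Symbol.nonterminal A] ++ y.map Symbol.terminal ≠
        γ ++ [Symbol.nonterminal B] ++ x.map Symbol.terminal := by
  simp only [CFG.IsLR, not_forall] at hnlr
  obtain ⟨α, β, γ, δ, A, B, w, x, y, h₁, hA, h₂, hB, heq, hfirst, hne⟩ := hnlr
  by_cases hlen : (α ++ β).length ≤ (γ ++ δ).length
  · refine ⟨α, β, γ, δ, A, B, w, x, y, h₁, hA, h₂, hB, heq, hfirst, hlen, fun h => hne ?_⟩
    obtain ⟨hα, hAB, hy⟩ := CFG.eq_of_append_nonterminal_append_map_terminal_eq h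
    exact ⟨hα, hAB, hy.symm⟩
  · -- Here `αβ = γδz` and `x = zy` for a nonempty terminal word `z`: swap the derivations.
    push Not at hlen
    obtain ⟨ζ, hζ, hx⟩ : ∃ ζ, α ++ β = γ ++ δ ++ ζ ∧
        x.map Symbol.terminal = ζ ++ y.map Symbol.terminal := by
      obtain ⟨ζ, h, h'⟩ | ⟨ζ, h, h'⟩ := List.append_eq_append_iff.1 heq
      · exact ⟨ζ, h, h'⟩
      · exact absurd (congrArg List.length h) (by simp at hlen ⊢; omega)
    obtain ⟨z, y', rfl, rfl, hy⟩ := List.map_eq_append_iff.1 hx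
    obtain rfl := CFG.map_terminal_injective hy
    refine ⟨γ, δ, α, β, B, A, z ++ y', w, z ++ w, h₂, hB, h₁, hA, by simp [hζ],
      (G.firstK_append_congr hfirst z).symm, hlen.le, fun h => ?_⟩
    obtain ⟨-, -, hw⟩ := CFG.eq_of_append_nonterminal_append_map_terminal_eq h
    obtain rfl : z = [] := by simpa using hw
    simp [hζ] at hlen
end

section
/- Let k ≥ 0 be an integer and G = (V,Σ,P,S) a reduced context-free grammar. If two distinct LR(k)-items [A → β·, u] and [C → β₁·, u] with the same lookahead u are both valid for the same string αβ ∈ V* (so that in particular β₁ is a suffix of αβ), then G is not LR(k). -/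
namespace CFG

variable {T N : Type}

/-- A terminal word derives only itself. -/
theorem eq_of_derives_map_terminal {G : CFG T N} {w : List T} {α : List (Symbol T N)}
    (h : G.Derives (w.map Symbol.terminal) α) : α = w.map Symbol.terminal := by
  induction h with
  | refl => rfl
  | tail _ hstep ih =>
    subst ih
    obtain ⟨A, δ, φ, ψ, -, hα, -⟩ := hstep
    have hmem : Symbol.nonterminal A ∈ w.map (Symbol.terminal (N := N)) := by
      rw [hα]; simp
    simp at hmem

end CFG

/-- **Case 1 of Theorem 1.** If two distinct complete `LR(k)`-items
`[A → β·, u]` and `[C → β₁·, u]` with the same lookahead `u` are both valid for the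
same string `γ = αβ ∈ V*`, then the reduced cfg `G` is not `LR(k)`. -/
theorem statement_4 {T N : Type} (G : CFG T N) (k : ℕ) (hred : G.Reduced)
    (A C : N) (β β₁ : List (Symbol T N)) (u : List T) (γ : List (Symbol T N))
    (h1 : G.ValidItem k A β [] u γ)
    (h2 : G.ValidItem k C β₁ [] u γ)
    (hne : (A, β) ≠ (C, β₁)) :
    ¬ G.IsLR k := by
  intro hLR
  obtain ⟨-, hA, α, w, rfl, hαw, hu⟩ := h1
  obtain ⟨-, hC, α', x, hγ, hαx, hu'⟩ := h2
  rw [List.append_nil] at hA hC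
  rw [List.nil_append, CFG.firstK_map_terminal, Set.mem_singleton_iff] at hu hu'
  have hfirst : G.FirstK k (w.map Symbol.terminal) = G.FirstK k (x.map Symbol.terminal) := by
    rw [CFG.firstK_map_terminal, CFG.firstK_map_terminal, ← hu, ← hu']
  obtain ⟨rfl, rfl, -⟩ :=
    hLR α β α' β₁ A C w x x hαw hA hαx hC (by rw [hγ]) hfirst
  exact hne (by rw [List.append_cancel_left hγ])
end

section
/- Let k ≥ 0 be an integer and G = (V,Σ,P,S) a reduced LR(k)-grammar. If two LR(k)-items [A → β·, u] and [A' → β'·, u] with the same lookahead u ∈ Σ^{≤k} are both valid for the same string γ ∈ V*, then A = A' and β = β' (i.e., for each γ and u there is at most one valid complete LR(k)-item). -/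
namespace CFG

variable {T N : Type}

/-- A terminal word derives only itself. -/
theorem Derives.eq_of_map_terminal {G : CFG T N} {w : List T} {β : List (Symbol T N)}
    (h : G.Derives (w.map Symbol.terminal) β) : β = w.map Symbol.terminal := by
  induction h with
  | refl => rfl
  | tail _ hstep ih =>
    obtain ⟨A, δ, φ, ψ, -, h, -⟩ := hstep
    have hmem : Symbol.nonterminal A ∈ w.map (Symbol.terminal (N := N)) := by
      rw [← ih, h]
      simp
    simp at hmem

end CFG

/-- For a reduced `LR(k)`-grammar `G`: if two complete `LR(k)`-items
`[A → β·, u]` and `[A' → β'·, u]` with the same lookahead `u ∈ Σ^{≤k}` are both valid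
for the same string `γ ∈ V*`, then `A = A'` and `β = β'`. -/
theorem statement_10 {T N : Type} (G : CFG T N) (k : ℕ)
    (hred : G.Reduced) (hlr : G.IsLR k)
    (A A' : N) (β β' : List (Symbol T N)) (u : List T) (γ : List (Symbol T N))
    (h1 : G.ValidItem k A β [] u γ)
    (h2 : G.ValidItem k A' β' [] u γ) :
    A = A' ∧ β = β' := by
  obtain ⟨-, hrule, α, w, rfl, hder, hu⟩ := h1
  obtain ⟨-, hrule', α', w', hγ, hder', hu'⟩ := h2
  rw [List.append_nil] at hrule hrule'
  rw [List.nil_append, CFG.firstK_map_terminal, Set.mem_singleton_iff] at hu hu'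
  obtain ⟨rfl, hA, -⟩ := hlr α β α' β' A A' w w' w' hder hrule hder' hrule'
    (by rw [hγ]) (by rw [CFG.firstK_map_terminal, CFG.firstK_map_terminal, ← hu, ← hu'])
  exact ⟨hA, List.append_cancel_left hγ⟩
end
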